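/- arXiv:1611.05450 — 5 statements merged into one kernel-verified Lean document; each statement's English description precedes it below -/
import Mathlib

section
/- Let V be a finite set with N = |V| elements, let the matrix index type n satisfy |n| = 2^N, and let h : V → Matrix n n ℂ be pairwise commuting matrices such that for every nonempty subset M ⊆ V the trace of the product ∏_{v ∈ M} h v vanishes. Then for every subset T ⊆ V, the trace of ∏_{v ∈ T} (1 + h v) equals 2^N. -/
/-! Expanding `∏ (1 + h v)` over the subsets of `T`, every nonempty subset contributes a traceless
product, so only the empty one survives, and its trace is that of the identity matrix. -/

section NoncommProd

open scoped Function

variable {ι R : Type*} [Semiring R] {f : ι → R}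

theorem pairwise_commute_one_add (hf : Pairwise (Commute on f)) :
    Pairwise (Commute on fun i ↦ 1 + f i) :=
  fun _ _ hij ↦ (Commute.one_left _).add_left ((Commute.one_right _).add_right (hf hij))

theorem noncommProd_one_add (s : Finset ι) (hf : Pairwise (Commute on f)) :
    s.noncommProd (fun i ↦ 1 + f i) ((pairwise_commute_one_add hf).set_pairwise _) =
      ∑ t ∈ s.powerset, t.noncommProd f (hf.set_pairwise _) := by
  classical
  induction s using Finset.induction_on with
  | empty => simp
  | insert a s ha ih =>
    have mul_noncommProd (t : Finset ι) (ht : t ∈ s.powerset) :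
        f a * t.noncommProd f (hf.set_pairwise _) =
          (insert a t).noncommProd f (hf.set_pairwise _) :=
      (Finset.noncommProd_insert_of_notMem t a f _
        (Finset.notMem_of_mem_powerset_of_notMem ht ha)).symm
    rw [Finset.noncommProd_insert_of_notMem _ _ _ _ ha, ih, add_mul, one_mul, Finset.mul_sum,
      Finset.sum_congr rfl mul_noncommProd, Finset.sum_powerset_insert ha]

theorem map_noncommProd_one_add_of_map_eq_zero {A : Type*} [AddCommMonoid A] (φ : R →+ A)
    (s : Finset ι) (hf : Pairwise (Commute on f))
    (hφ : ∀ t ⊆ s, t.Nonempty → φ (t.noncommProd f (hf.set_pairwise _)) = 0) :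
    φ (s.noncommProd (fun i ↦ 1 + f i) ((pairwise_commute_one_add hf).set_pairwise _)) = φ 1 :=
  calc
    _ = ∑ t ∈ s.powerset, φ (t.noncommProd f (hf.set_pairwise _)) := by
      rw [noncommProd_one_add s hf, map_sum]
    _ = φ ((∅ : Finset ι).noncommProd f (hf.set_pairwise _)) :=
      Finset.sum_eq_single_of_mem ∅ (Finset.empty_mem_powerset s) fun t ht hne ↦
        hφ t (Finset.mem_powerset.1 ht) (Finset.nonempty_iff_ne_empty.2 hne)
    _ = φ 1 := by rw [Finset.noncommProd_empty]

theorem trace_prod_one_add_of_traceless_general {n : Type*} [Fintype n] [DecidableEq n]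
    {h : ι → Matrix n n R} (hcomm : Pairwise (Commute on h)) (T : Finset ι)
    (htr : ∀ M ⊆ T, M.Nonempty → (M.noncommProd h (hcomm.set_pairwise _)).trace = 0) :
    (T.noncommProd (fun v ↦ 1 + h v) ((pairwise_commute_one_add hcomm).set_pairwise _)).trace =
      Fintype.card n :=
  (map_noncommProd_one_add_of_map_eq_zero (Matrix.traceAddMonoidHom n R) T hcomm htr).trans
    Matrix.trace_one

end NoncommProd

/-- If pairwise commuting matrices `h v` on a `2^N`-dimensional space have traceless
products over every nonempty subset, then `Tr ∏_{v ∈ T} (1 + h v) = 2^N` for every subset `T`. -/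
theorem trace_prod_one_add_of_traceless {V n : Type*} [Fintype V] [DecidableEq V]
    [Fintype n] [DecidableEq n]
    (h : V → Matrix n n ℂ)
    (hcomm : ∀ v w, Commute (h v) (h w))
    (hcard : Fintype.card n = 2 ^ Fintype.card V)
    (htr : ∀ M : Finset V, M.Nonempty →
      (M.noncommProd h (fun a _ b _ _ => hcomm a b)).trace = 0)
    (T : Finset V) :
    (T.noncommProd (fun v => 1 + h v)
        (fun a _ b _ _ =>
          (Commute.one_left (1 + h b)).add_left
            ((Commute.one_right (h a)).add_right (hcomm a b)))).trace =
      (2 : ℂ) ^ Fintype.card V := by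
  simpa [hcard] using
    trace_prod_one_add_of_traceless_general (fun v w _ ↦ hcomm v w) T fun M _ ↦ htr M
end

section
/- Let V be a finite set with N = |V| ≥ 1 elements, let h : V → (square complex matrices) be pairwise commuting Hermitian matrices with (h v)*(h v) = 1, and let P be a Hermitian matrix with P*P = P that commutes with every h v. Fix β > 0 and set p = 2/(e^{2β}+1); for T ⊆ V set Pr(T) = (1-p)^{|T|} p^{N-|T|} and ρ(T) = 2^{-N} • ∏_{v ∈ T}(1 + h v). Assume: Tr(ρ(T)) = 1 for every T ⊆ V; Tr(P * ρ(T)) = 1/2 for every T ≠ V; and P * ρ(V) = ρ(V). Define ρ' = Σ_{T ⊆ V} Pr(T) • ρ(T), Z = Tr(P * ρ' * P), ρ_sym = Z⁻¹ • (P * ρ' * P), and ρ_f = Pr(V) • ρ(V) + Σ_{T ≠ V} (2·Pr(T)) • (P * ρ(T) * P). Then the matrix D = ρ_sym − ρ_f is Hermitian and its trace norm, i.e. the sum of the absolute values of its eigenvalues, is at most 2(1-p)^N / (1 + (1-p)^N). -/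
/-!
The symmetrized Gibbs state is the state obtained by conditioning the mixture `∑ w i • ρ i` on the
measurement outcome `K`, and the free symmetric state is the mixture of the conditioned states.
With `t i = Tr (K ρ i Kᴴ)` and `Z = ∑ w i * t i`, their difference is
`∑ w i * (Z⁻¹ - (t i)⁻¹) • (K ρ i Kᴴ)`, a real combination of positive semidefinite matrices, so its
trace norm is at most `∑ w i * |t i / Z - 1|`. When `t` equals `1` at one index of weight `q` and
`1 / 2` elsewhere, `Z = (1 + q) / 2` and this sum is `2 * q * (1 - q) / (1 + q)`. Each `ρ T` is
positive semidefinite because `1 + h v` is twice a projection and these projections commute.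
-/

open Matrix
open scoped ComplexOrder

lemma two_div_exp_add_one_mem_Icc {x : ℝ} (hx : 0 ≤ x) :
    2 / (Real.exp x + 1) ∈ Set.Icc (0 : ℝ) 1 := by
  refine ⟨by positivity, (div_le_one (by positivity)).mpr ?_⟩
  linarith [Real.one_le_exp hx]

lemma pow_card_mul_pow_mem_stdSimplex (V : Type*) [Fintype V] {p : ℝ} (hp : p ∈ Set.Icc 0 1) :
    (fun T : Finset V => (1 - p) ^ T.card * p ^ (Fintype.card V - T.card)) ∈
      stdSimplex ℝ (Finset V) := by
  refine ⟨fun T => mul_nonneg (pow_nonneg (sub_nonneg.mpr hp.2) _) (pow_nonneg hp.1 _), ?_⟩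
  rw [Fintype.sum_pow_mul_eq_add_pow, sub_add_cancel, one_pow]

lemma sum_mul_eq_add_of_eq_off {ι R : Type*} [Fintype ι] [CommRing R] (w f : ι → R) (i₀ : ι)
    {b : R} (hf : ∀ i ≠ i₀, f i = b) :
    ∑ i, w i * f i = w i₀ * f i₀ + ((∑ i, w i) - w i₀) * b := by
  classical
  rw [← Finset.add_sum_erase _ _ (Finset.mem_univ i₀),
    ← Finset.add_sum_erase _ w (Finset.mem_univ i₀), add_sub_cancel_left, Finset.sum_mul]
  congr 1
  exact Finset.sum_congr rfl fun i hi => by rw [hf i (Finset.ne_of_mem_erase hi)]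

lemma sum_abs_mul_abs_div_sub_one_of_eq_half {ι : Type*} [Fintype ι] {w t : ι → ℝ}
    (hw : w ∈ stdSimplex ℝ ι) (i₀ : ι) (ht₀ : t i₀ = 1) (ht : ∀ i ≠ i₀, t i = 1 / 2) :
    ∑ i, |w i| * |t i / (∑ k, w k * t k) - 1| = 2 * w i₀ * (1 - w i₀) / (1 + w i₀) := by
  have hq₀ : 0 ≤ w i₀ := hw.1 i₀
  have hq₁ : 0 ≤ 1 - w i₀ := sub_nonneg.mpr (mem_Icc_of_mem_stdSimplex hw i₀).2
  have hZ : ∑ k, w k * t k = (1 + w i₀) / 2 := by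
    rw [sum_mul_eq_add_of_eq_off w t i₀ ht, ht₀, hw.2]
    ring
  have h_off (i) (hi : i ≠ i₀) : |t i / ((1 + w i₀) / 2) - 1| = w i₀ / (1 + w i₀) := by
    rw [ht i hi, ← abs_neg, ← abs_of_nonneg (show 0 ≤ w i₀ / (1 + w i₀) by positivity)]
    congr 1
    field_simp
    ring
  have h_at : |t i₀ / ((1 + w i₀) / 2) - 1| = (1 - w i₀) / (1 + w i₀) := by
    rw [ht₀, ← abs_of_nonneg (show 0 ≤ (1 - w i₀) / (1 + w i₀) by positivity)]
    congr 1
    field_simp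
    ring
  simp only [hZ, abs_of_nonneg (hw.1 _)]
  rw [sum_mul_eq_add_of_eq_off w _ i₀ h_off, h_at, hw.2]
  ring

section PosSemidef

variable {n 𝕜 : Type*} [Fintype n] [DecidableEq n] [RCLike 𝕜]

lemma posSemidef_one_add_of_mul_self_eq_one {A : Matrix n n 𝕜} (hA : A.IsHermitian)
    (hsq : A * A = 1) : (1 + A).PosSemidef := by
  have h_square : 1 + A = (2⁻¹ : ℝ) • ((1 + A)ᴴ * (1 + A)) := by
    rw [(isHermitian_one.add hA).eq, mul_add, mul_one, add_mul, one_mul, hsq]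
    module
  rw [h_square]
  exact (posSemidef_conjTranspose_mul_self (1 + A)).smul (by positivity)

open scoped MatrixOrder in
lemma posSemidef_noncommProd {V : Type*} (f : V → Matrix n n 𝕜) (T : Finset V)
    (hf : ∀ v ∈ T, (f v).PosSemidef) (hcomm : (T : Set V).Pairwise (Function.onFun Commute f)) :
    (T.noncommProd f hcomm).PosSemidef := by
  induction T using Finset.cons_induction with
  | empty => simpa only [Finset.noncommProd_empty] using PosSemidef.one
  | cons v T hv ih =>
    have hcommT : (T : Set V).Pairwise (Function.onFun Commute f) :=
      hcomm.mono (Finset.coe_subset.mpr (Finset.subset_cons hv))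
    have hcommv : Commute (f v) (T.noncommProd f hcommT) :=
      Finset.noncommProd_commute _ _ _ _ fun w hw =>
        hcomm (Finset.mem_cons_self v T) (Finset.mem_cons_of_mem hw)
          (ne_of_mem_of_not_mem hw hv).symm
    obtain ⟨hfv, hfT⟩ := Finset.forall_mem_cons hv _ |>.mp hf
    rw [Finset.noncommProd_cons]
    exact (Commute.mul_nonneg hfv.nonneg (ih hfT hcommT).nonneg hcommv).posSemidef

end PosSemidef

section TraceNorm

variable {n 𝕜 : Type*} [Fintype n] [DecidableEq n] [RCLike 𝕜]

/-- The trace norm of a Hermitian matrix, as the sum of the absolute values of its eigenvalues. -/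
noncomputable def traceNorm {A : Matrix n n 𝕜} (hA : A.IsHermitian) : ℝ :=
  ∑ j, |hA.eigenvalues j|

/-- In an eigenbasis of the combination, each eigenvalue is a combination of the (nonnegative)
diagonal entries of the summands. -/
lemma traceNorm_sum_smul_le {ι : Type*} [Fintype ι] (c : ι → ℝ) (A : ι → Matrix n n 𝕜)
    (hA : ∀ i, (A i).PosSemidef) (hD : (∑ i, c i • A i).IsHermitian) :
    traceNorm hD ≤ ∑ i, |c i| * RCLike.re (A i).trace := by
  let U : Matrix n n 𝕜 := hD.eigenvectorUnitary.1
  have hUU : U * Uᴴ = 1 := mem_unitaryGroup_iff.mp hD.eigenvectorUnitary.2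
  let d (i : ι) (j : n) : ℝ := RCLike.re ((Uᴴ * A i * U) j j)
  have hd_nonneg (i j) : 0 ≤ d i j :=
    (RCLike.nonneg_iff.mp ((hA i).conjTranspose_mul_mul_same U).diag_nonneg).1
  have hd_sum (i) : ∑ j, d i j = RCLike.re (A i).trace := by
    rw [← one_mul (A i), ← hUU, ← trace_mul_cycle, trace, map_sum]
    rfl
  have h_eigenvalues (j) : hD.eigenvalues j = ∑ i, c i * d i j := by
    have h_diag : Uᴴ * (∑ i, c i • A i) * U = diagonal (RCLike.ofReal ∘ hD.eigenvalues) := by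
      rw [← hD.conjStarAlgAut_star_eigenvectorUnitary, Unitary.conjStarAlgAut_star_apply]
      rfl
    have h_entry := congrArg RCLike.re (congrFun (congrFun h_diag j) j)
    rw [diagonal_apply_eq, Function.comp_apply, RCLike.ofReal_re] at h_entry
    simp only [← h_entry, d, Finset.mul_sum, Finset.sum_mul, mul_smul_comm, smul_mul_assoc,
      Matrix.sum_apply, map_sum, Matrix.smul_apply, RCLike.smul_re]
  calc traceNorm hD = ∑ j, |∑ i, c i * d i j| := by simp only [traceNorm, h_eigenvalues]
    _ ≤ ∑ j, ∑ i, |c i| * d i j := by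
      gcongr with j
      refine (Finset.abs_sum_le_sum_abs _ _).trans_eq ?_
      simp only [abs_mul, abs_of_nonneg (hd_nonneg _ j)]
    _ = ∑ i, |c i| * RCLike.re (A i).trace := by
      rw [Finset.sum_comm]
      simp only [← Finset.mul_sum, hd_sum]

end TraceNorm

section ConditionedState

variable {ι m n 𝕜 : Type*} [Fintype ι] [Fintype m] [Fintype n] [RCLike 𝕜]

/-- The state after a measurement outcome with Kraus operator `K`, namely `K ρ Kᴴ` normalized to
trace one; it is `0` when `K ρ Kᴴ` has trace zero. -/
noncomputable def conditionedState (K : Matrix m n 𝕜) (ρ : Matrix n n 𝕜) : Matrix m m 𝕜 :=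
  (K * ρ * Kᴴ).trace⁻¹ • (K * ρ * Kᴴ)

lemma conditionedState_eq_inv_smul {K : Matrix m n 𝕜} {ρ : Matrix n n 𝕜} {t : ℝ}
    (ht : (K * ρ * Kᴴ).trace = t) : conditionedState K ρ = t⁻¹ • (K * ρ * Kᴴ) := by
  rw [conditionedState, ht, ← RCLike.ofReal_inv, ← RCLike.real_smul_eq_coe_smul]

lemma conditionedState_sum_sub_sum_conditionedState (w t : ι → ℝ) (ρ : ι → Matrix n n 𝕜)
    (K : Matrix m n 𝕜) (ht : ∀ i, (K * ρ i * Kᴴ).trace = t i) :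
    conditionedState K (∑ i, w i • ρ i) - ∑ i, w i • conditionedState K (ρ i) =
      ∑ i, (w i * ((∑ k, w k * t k)⁻¹ - (t i)⁻¹)) • (K * ρ i * Kᴴ) := by
  have h_mix : K * (∑ i, w i • ρ i) * Kᴴ = ∑ i, w i • (K * ρ i * Kᴴ) := by
    simp only [Matrix.mul_sum, Matrix.sum_mul, Matrix.mul_smul, Matrix.smul_mul]
  have h_trace : (K * (∑ i, w i • ρ i) * Kᴴ).trace = (∑ k, w k * t k : ℝ) := by
    simp only [h_mix, trace_sum, trace_smul, ht, RCLike.real_smul_eq_coe_mul, RCLike.ofReal_sum,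
      RCLike.ofReal_mul]
  rw [conditionedState_eq_inv_smul h_trace, h_mix, Finset.smul_sum, ← Finset.sum_sub_distrib]
  refine Finset.sum_congr rfl fun i _ => ?_
  rw [conditionedState_eq_inv_smul (ht i)]
  module

theorem traceNorm_conditionedState_sum_sub_le [DecidableEq m] (w t : ι → ℝ)
    (ρ : ι → Matrix n n 𝕜) (hρ : ∀ i, (ρ i).PosSemidef) (K : Matrix m n 𝕜)
    (ht : ∀ i, (K * ρ i * Kᴴ).trace = t i) (ht₀ : ∀ i, t i ≠ 0) :
    ∃ hD : (conditionedState K (∑ i, w i • ρ i) -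
        ∑ i, w i • conditionedState K (ρ i)).IsHermitian,
      traceNorm hD ≤ ∑ i, |w i| * |t i / (∑ k, w k * t k) - 1| := by
  rw [conditionedState_sum_sub_sum_conditionedState w t ρ K ht]
  have hKρ (i) : (K * ρ i * Kᴴ).PosSemidef := (hρ i).mul_mul_conjTranspose_same K
  have ht_nonneg (i) : 0 ≤ t i := by
    simpa only [ht, RCLike.ofReal_nonneg] using (hKρ i).trace_nonneg
  refine ⟨isSelfAdjoint_sum _ fun i _ => IsSelfAdjoint.smul (.all _) (hKρ i).isHermitian,
    (traceNorm_sum_smul_le _ _ hKρ _).trans_eq (Finset.sum_congr rfl fun i _ => ?_)⟩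
  rw [ht, RCLike.ofReal_re, abs_mul, mul_assoc]
  congr 1
  calc |(∑ k, w k * t k)⁻¹ - (t i)⁻¹| * t i
      = |((∑ k, w k * t k)⁻¹ - (t i)⁻¹) * t i| := by rw [abs_mul, abs_of_nonneg (ht_nonneg i)]
    _ = |t i / (∑ k, w k * t k) - 1| := by
      rw [sub_mul, inv_mul_cancel₀ (ht₀ i), inv_mul_eq_div]

end ConditionedState

section HalfTrace

variable {ι n 𝕜 : Type*} [Fintype ι] [DecidableEq ι] [Fintype n] [RCLike 𝕜]

lemma mul_mul_conjTranspose_eq_self {R : Type*} [NonUnitalSemiring R] [StarRing R]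
    {K ρ : Matrix n n R} (hρ : ρ.IsHermitian) (hK : K * ρ = ρ) : K * ρ * Kᴴ = ρ :=
  calc K * ρ * Kᴴ = ρᴴ * Kᴴ := by rw [hK, hρ.eq]
    _ = ρ := by rw [← conjTranspose_mul, hK, hρ.eq]

lemma sum_smul_conditionedState_of_trace_eq_half (w : ι → ℝ) (ρ : ι → Matrix n n 𝕜)
    (K : Matrix n n 𝕜) (i₀ : ι) (h₀ : K * ρ i₀ * Kᴴ = ρ i₀) (htr₀ : (ρ i₀).trace = 1)
    (htr : ∀ i ≠ i₀, (K * ρ i * Kᴴ).trace = 1 / 2) :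
    ∑ i, w i • conditionedState K (ρ i) =
      w i₀ • ρ i₀ + ∑ i ∈ Finset.univ.erase i₀, (2 * w i) • (K * ρ i * Kᴴ) := by
  rw [← Finset.add_sum_erase _ _ (Finset.mem_univ i₀)]
  congr 1
  · rw [conditionedState, h₀, htr₀, inv_one, one_smul]
  · refine Finset.sum_congr rfl fun i hi => ?_
    have ht : (K * ρ i * Kᴴ).trace = (1 / 2 : ℝ) := by
      rw [htr i (Finset.ne_of_mem_erase hi), RCLike.ofReal_div, RCLike.ofReal_one,
        RCLike.ofReal_ofNat]
    rw [conditionedState_eq_inv_smul ht, smul_smul, one_div, inv_inv, mul_comm]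

theorem traceNorm_symmetric_gibbs_minus_free_general [DecidableEq n] {w : ι → ℝ}
    (hw : w ∈ stdSimplex ℝ ι) (i₀ : ι) (ρ : ι → Matrix n n 𝕜) (hρ : ∀ i, (ρ i).PosSemidef)
    (K : Matrix n n 𝕜) (hK : K * ρ i₀ = ρ i₀) (htr₀ : (ρ i₀).trace = 1)
    (htr : ∀ i ≠ i₀, (K * ρ i * Kᴴ).trace = 1 / 2) :
    ∃ hD : (conditionedState K (∑ i, w i • ρ i) - (w i₀ • ρ i₀ +
        ∑ i ∈ Finset.univ.erase i₀, (2 * w i) • (K * ρ i * Kᴴ))).IsHermitian,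
      traceNorm hD ≤ 2 * w i₀ * (1 - w i₀) / (1 + w i₀) := by
  have h₀ : K * ρ i₀ * Kᴴ = ρ i₀ := mul_mul_conjTranspose_eq_self (hρ i₀).isHermitian hK
  let t (i : ι) : ℝ := if i = i₀ then 1 else 1 / 2
  have ht₀ : t i₀ = 1 := if_pos rfl
  have ht_off (i) (hi : i ≠ i₀) : t i = 1 / 2 := if_neg hi
  have ht (i) : (K * ρ i * Kᴴ).trace = t i := by
    obtain rfl | hi := eq_or_ne i i₀
    · rw [h₀, htr₀, ht₀, RCLike.ofReal_one]
    · rw [htr i hi, ht_off i hi, RCLike.ofReal_div, RCLike.ofReal_one, RCLike.ofReal_ofNat]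
  have ht_ne (i) : t i ≠ 0 := by
    dsimp only [t]
    split_ifs <;> norm_num
  rw [← sum_smul_conditionedState_of_trace_eq_half w ρ K i₀ h₀ htr₀ htr,
    ← sum_abs_mul_abs_div_sub_one_of_eq_half hw i₀ ht₀ ht_off]
  exact traceNorm_conditionedState_sum_sub_le w t ρ hρ K ht ht_ne

end HalfTrace

/-- Trace-norm bound between the symmetric Gibbs ensemble and the free symmetric ensemble. -/
theorem traceNorm_symmetric_gibbs_minus_free {V n : Type*} [Fintype V] [DecidableEq V]
    [Fintype n] [DecidableEq n]
    (h : V → Matrix n n ℂ)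
    (hcomm : ∀ v w, Commute (h v) (h w))
    (hherm : ∀ v, (h v).IsHermitian)
    (hsq : ∀ v, h v * h v = 1)
    (P : Matrix n n ℂ) (hPherm : P.IsHermitian) (hPP : P * P = P)
    (hPcomm : ∀ v, Commute P (h v))
    (hN : 1 ≤ Fintype.card V)
    (β p : ℝ) (hβ : 0 < β) (hp : p = 2 / (Real.exp (2 * β) + 1))
    (Pr : Finset V → ℝ)
    (hPr : ∀ T : Finset V, Pr T = (1 - p) ^ T.card * p ^ (Fintype.card V - T.card))
    (ρ : Finset V → Matrix n n ℂ)
    (hρ : ∀ T : Finset V, ρ T = ((2 : ℂ) ^ Fintype.card V)⁻¹ •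
        T.noncommProd (fun v => 1 + h v)
          (fun a _ b _ _ =>
            (Commute.one_left (1 + h b)).add_left
              ((Commute.one_right (h a)).add_right (hcomm a b))))
    (htr1 : ∀ T : Finset V, (ρ T).trace = 1)
    (htrP : ∀ T : Finset V, T ≠ Finset.univ → (P * ρ T).trace = 1 / 2)
    (hPV : P * ρ (Finset.univ : Finset V) = ρ (Finset.univ : Finset V))
    (ρ' : Matrix n n ℂ)
    (hρ' : ρ' = ∑ T ∈ (Finset.univ : Finset V).powerset, Pr T • ρ T)
    (Z : ℂ) (hZ : Z = (P * ρ' * P).trace)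
    (ρsym : Matrix n n ℂ) (hρsym : ρsym = Z⁻¹ • (P * ρ' * P))
    (ρf : Matrix n n ℂ)
    (hρf : ρf = Pr (Finset.univ : Finset V) • ρ (Finset.univ : Finset V) +
        ∑ T ∈ ((Finset.univ : Finset V).powerset).erase (Finset.univ : Finset V),
          (2 * Pr T) • (P * ρ T * P))
    (D : Matrix n n ℂ) (hD : D = ρsym - ρf) :
    ∃ hDh : D.IsHermitian,
      ∑ i, |hDh.eigenvalues i| ≤
        2 * (1 - p) ^ Fintype.card V / (1 + (1 - p) ^ Fintype.card V) := by
  subst hD hρsym hρf hZ hρ' hp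
  rw [Finset.powerset_univ]
  have hw : Pr ∈ stdSimplex ℝ (Finset V) := funext hPr ▸
    pow_card_mul_pow_mem_stdSimplex V (two_div_exp_add_one_mem_Icc (by positivity))
  have hρ_psd (T) : (ρ T).PosSemidef := hρ T ▸
    (posSemidef_noncommProd _ T
      (fun v _ => posSemidef_one_add_of_mul_self_eq_one (hherm v) (hsq v)) _).smul (by positivity)
  have htr (T) (hT : T ≠ Finset.univ) : (P * ρ T * Pᴴ).trace = 1 / 2 := by
    rw [hPherm.eq, trace_mul_cycle, hPP, htrP T hT]
  have h_bound := traceNorm_symmetric_gibbs_minus_free_general hw Finset.univ ρ hρ_psd P hPV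
    (htr1 _) htr
  simp only [conditionedState, hPherm.eq] at h_bound
  obtain ⟨hDh, hle⟩ := h_bound
  have hPr_univ : Pr Finset.univ = (1 - 2 / (Real.exp (2 * β) + 1)) ^ Fintype.card V := by
    rw [hPr, Finset.card_univ, Nat.sub_self, pow_zero, mul_one]
  have hq : 0 ≤ Pr Finset.univ := hw.1 _
  rw [← hPr_univ]
  exact ⟨hDh, hle.trans (div_le_div_of_nonneg_right (by nlinarith) (by positivity))⟩
end

section
/- Let p ∈ (0,1) and c > 0 be real numbers such that δ := −2 − c·log(1−p) > 0. Then for every real L ≥ e and every natural number n with (n : ℝ) ≤ L² / (c · log L), we have 1 − (1 − (1−p)^{c·log L})^n ≤ (1/c) · L^{−δ}, where (1−p)^{c·log L} and L^{−δ} denote real powers (rpow). -/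
/-! Bernoulli's inequality bounds the probability by `n * (1 - p) ^ (c * log L)`, and
`(1 - p) ^ (c * log L) = L ^ (c * log (1 - p)) = L ^ (-δ - 2)` is small enough to absorb the
factor `L ^ 2` allowed for `n`. -/

theorem one_sub_one_sub_pow_le_mul {R : Type*} [Ring R] [LinearOrder R] [IsStrictOrderedRing R]
    {q : R} (hq : q ≤ 2) (n : ℕ) : 1 - (1 - q) ^ n ≤ n * q := by
  have bernoulli : 1 + n * -q ≤ (1 + -q) ^ n := one_add_mul_le_pow (neg_le_neg hq) n
  rwa [mul_neg, ← sub_eq_add_neg, ← sub_eq_add_neg, sub_le_comm] at bernoulli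

theorem rpow_mul_log_comm {x y : ℝ} (hx : 0 < x) (hy : 0 < y) (c : ℝ) :
    x ^ (c * Real.log y) = y ^ (c * Real.log x) := by
  rw [Real.rpow_def_of_pos hx, Real.rpow_def_of_pos hy, mul_left_comm,
    mul_left_comm (Real.log y), mul_comm (Real.log x)]

theorem sq_mul_rpow_mul_log {x y : ℝ} (hx : 0 < x) (hy : 0 < y) (c : ℝ) :
    y ^ 2 * x ^ (c * Real.log y) = y ^ (2 + c * Real.log x) := by
  rw [rpow_mul_log_comm hx hy, Real.rpow_add hy, Real.rpow_two]

theorem div_mul_log_le_one_div_mul {a c x : ℝ} (ha : 0 ≤ a) (hc : 0 < c)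
    (hx : Real.exp 1 ≤ x) : a / (c * Real.log x) ≤ 1 / c * a := by
  have one_le_log : 1 ≤ Real.log x :=
    (Real.le_log_iff_exp_le ((Real.exp_pos 1).trans_le hx)).mpr hx
  rw [one_div_mul_eq_div]
  exact div_le_div_of_nonneg_left ha hc (le_mul_of_one_le_right hc.le one_le_log)

theorem valid_configuration_probability_bound_general
    (p c : ℝ) (hp0 : 0 ≤ p) (hp1 : p < 1) (hc : 0 < c)
    (δ : ℝ) (hδdef : δ = -2 - c * Real.log (1 - p))
    (L : ℝ) (hL : 1 < L)
    (n : ℕ) (hn : (n : ℝ) ≤ L ^ 2 / (c * Real.log L)) :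
    1 - (1 - (1 - p) ^ (c * Real.log L)) ^ n ≤ L ^ (-δ) / (c * Real.log L) := by
  have hp : 0 < 1 - p := sub_pos.mpr hp1
  have hpow : (1 - p) ^ (c * Real.log L) ≤ 1 :=
    Real.rpow_le_one hp.le (sub_le_self 1 hp0) (mul_pos hc (Real.log_pos hL)).le
  have hexponent : 2 + c * Real.log (1 - p) = -δ := by linarith
  calc
    1 - (1 - (1 - p) ^ (c * Real.log L)) ^ n
    _ ≤ n * (1 - p) ^ (c * Real.log L) :=
      one_sub_one_sub_pow_le_mul (hpow.trans one_le_two) n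
    _ ≤ L ^ 2 / (c * Real.log L) * (1 - p) ^ (c * Real.log L) :=
      mul_le_mul_of_nonneg_right hn (Real.rpow_nonneg hp.le _)
    _ = L ^ (-δ) / (c * Real.log L) := by
      rw [div_mul_eq_mul_div, sq_mul_rpow_mul_log hp (one_pos.trans hL), hexponent]

/-- If `δ = -2 - c·log(1-p) > 0`, then for `L ≥ e` and `n ≤ L²/(c log L)`,
`1 - (1 - (1-p)^{c log L})^n ≤ (1/c) L^{-δ}`. -/
theorem valid_configuration_probability_bound
    (p c : ℝ) (hp0 : 0 < p) (hp1 : p < 1) (hc : 0 < c)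
    (δ : ℝ) (hδdef : δ = -2 - c * Real.log (1 - p)) (hδ : 0 < δ)
    (L : ℝ) (hL : Real.exp 1 ≤ L)
    (n : ℕ) (hn : (n : ℝ) ≤ L ^ 2 / (c * Real.log L)) :
    1 - (1 - (1 - p) ^ (c * Real.log L)) ^ n ≤ (1 / c) * L ^ (-δ) := by
  have one_lt_L : 1 < L := (Real.one_lt_exp_iff.mpr one_pos).trans_le hL
  exact (valid_configuration_probability_bound_general p c hp0.le hp1 hc δ hδdef L one_lt_L n
    hn).trans (div_mul_log_le_one_div_mul (Real.rpow_nonneg (by positivity) _) hc hL)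
end

section
/- Let E be a finite type and let Z be a finite family of finite subsets of E that is closed under symmetric difference (for all a, b ∈ Z, a Δ b ∈ Z). Let β ≥ 0 be real and let l ∈ Z. Then Σ_{c ∈ Z, l ⊆ c} exp(−2β·|c|) ≤ exp(−2β·|l|) · Σ_{c ∈ Z} exp(−2β·|c|), where |c| denotes the cardinality of c. -/
open scoped symmDiff

/-!
The map `c ↦ c \ l` is injective on the members of `Z` containing `l`, and it lands in `Z`, since
`c \ l = l ∆ c` for `l ⊆ c`. With `x = exp (-2β)`, the weight factors as
`x ^ #c = x ^ #l * x ^ #(c \ l)`, so the left-hand sum is `x ^ #l` times a partial sum of the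
nonnegative weights over `Z`.
-/

theorem sum_sdiff_le_sum {α M : Type*} [GeneralizedCoheytingAlgebra α]
    [AddCommMonoid M] [PartialOrder M] [IsOrderedAddMonoid M]
    {Z : Finset α} {l : α} [DecidablePred (l ≤ ·)] (hZ : ∀ c ∈ Z, l ≤ c → c \ l ∈ Z)
    {f : α → M} (hf : ∀ c ∈ Z, 0 ≤ f c) :
    ∑ c ∈ Z with l ≤ c, f (c \ l) ≤ ∑ c ∈ Z, f c := by
  classical
  have sdiff_injOn : Set.InjOn (· \ l) (Z.filter (l ≤ ·) : Set α) :=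
    fun _ ha _ hb ↦ (sdiff_left_inj (Finset.mem_filter.mp ha).2 (Finset.mem_filter.mp hb).2).mp
  have image_subset : (Z.filter (l ≤ ·)).image (· \ l) ⊆ Z := by
    simpa only [Finset.image_subset_iff, Finset.mem_filter, and_imp] using hZ
  calc
    ∑ c ∈ Z with l ≤ c, f (c \ l) = ∑ d ∈ (Z.filter (l ≤ ·)).image (· \ l), f d :=
      (Finset.sum_image sdiff_injOn).symm
    _ ≤ ∑ c ∈ Z, f c :=
      Finset.sum_le_sum_of_subset_of_nonneg image_subset fun c hc _ ↦ hf c hc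

theorem sum_pow_card_subset_le {E R : Type*} [DecidableEq E]
    [Semiring R] [PartialOrder R] [IsOrderedRing R]
    {Z : Finset (Finset E)} {l : Finset E} (hZ : ∀ c ∈ Z, l ⊆ c → c \ l ∈ Z)
    {x : R} (hx : 0 ≤ x) :
    ∑ c ∈ Z with l ⊆ c, x ^ c.card ≤ x ^ l.card * ∑ c ∈ Z, x ^ c.card := by
  have pow_card_eq (c : Finset E) (hlc : l ⊆ c) : x ^ c.card = x ^ l.card * x ^ (c \ l).card := by
    rw [← pow_add, add_comm, Finset.card_sdiff_add_card_eq_card hlc]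
  calc
    ∑ c ∈ Z with l ⊆ c, x ^ c.card = x ^ l.card * ∑ c ∈ Z with l ⊆ c, x ^ (c \ l).card := by
      rw [Finset.mul_sum]
      exact Finset.sum_congr rfl fun c hc ↦ pow_card_eq c (Finset.mem_filter.mp hc).2
    _ ≤ x ^ l.card * ∑ c ∈ Z, x ^ c.card :=
      mul_le_mul_of_nonneg_left (sum_sdiff_le_sum hZ fun c _ ↦ pow_nonneg hx c.card)
        (pow_nonneg hx l.card)

theorem sum_exp_subset_le_general {E : Type*} [DecidableEq E]
    (Z : Finset (Finset E)) (l : Finset E) (hZ : ∀ c ∈ Z, l ⊆ c → c \ l ∈ Z) (β : ℝ) :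
    ∑ c ∈ Z with l ⊆ c, Real.exp (-2 * β * c.card) ≤
      Real.exp (-2 * β * l.card) * ∑ c ∈ Z, Real.exp (-2 * β * c.card) := by
  have exp_eq_pow (n : ℕ) : Real.exp (-2 * β * n) = Real.exp (-2 * β) ^ n := by
    rw [mul_comm, Real.exp_nat_mul]
  simpa only [exp_eq_pow] using sum_pow_card_subset_le hZ (Real.exp_nonneg (-2 * β))

/-- Peierls-type bound: for a family of cycles closed under symmetric difference,
the weight of cycles containing a fixed cycle `l` is suppressed by `exp(-2β|l|)`. -/
theorem sum_exp_subset_le {E : Type*} [Fintype E] [DecidableEq E]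
    (Z : Finset (Finset E))
    (hZ : ∀ a ∈ Z, ∀ b ∈ Z, a ∆ b ∈ Z)
    (β : ℝ) (hβ : 0 ≤ β) (l : Finset E) (hl : l ∈ Z) :
    ∑ c ∈ Z.filter (fun c => l ⊆ c), Real.exp (-2 * β * c.card) ≤
      Real.exp (-2 * β * l.card) * ∑ c ∈ Z, Real.exp (-2 * β * c.card) :=
  sum_exp_subset_le_general Z l (fun c hc hlc ↦ symmDiff_of_le hlc ▸ hZ l hl c hc) β
end

section
/- Let E be a finite type and let Z be a finite family of finite subsets of E that is closed under symmetric difference (for all a, b ∈ Z, a Δ b ∈ Z). Let β ≥ 0 be real and let L ⊆ Z be a subfamily. Then Σ_{c ∈ Z such that some l ∈ L satisfies l ⊆ c} exp(−2β·|c|) ≤ ( Σ_{l ∈ L} exp(−2β·|l|) ) · ( Σ_{c ∈ Z} exp(−2β·|c|) ), where |c| denotes the cardinality of c. -/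
open scoped symmDiff

/-!
Removing `l` from the members of `Z` that contain it is an injection into `Z`, since `c ∆ l = c \ l`
for `l ⊆ c`, and it factors the weight of `c` as the weight of `l` times the weight of `c \ l`.
So the members of `Z` containing a fixed `l` weigh at most the weight of `l` times that of `Z`,
and a union bound over `l ∈ L` finishes.
-/

section UnionBound

variable {ι α M : Type*} [AddCommMonoid M] [PartialOrder M] [IsOrderedAddMonoid M]

theorem sum_filter_exists_le_sum_sum_filter (I : Finset ι) (s : Finset α) (r : ι → α → Prop)
    [∀ i, DecidablePred (r i)] [DecidablePred fun a ↦ ∃ i ∈ I, r i a]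
    {f : α → M} (hf : ∀ a ∈ s, 0 ≤ f a) :
    ∑ a ∈ s with ∃ i ∈ I, r i a, f a ≤ ∑ i ∈ I, ∑ a ∈ s with r i a, f a := by
  simp only [Finset.sum_filter]
  rw [Finset.sum_comm]
  refine Finset.sum_le_sum fun a ha ↦ ?_
  have hterm : ∀ i ∈ I, 0 ≤ if r i a then f a else 0 := fun i _ ↦ by
    split_ifs
    exacts [hf a ha, le_rfl]
  split_ifs with h
  · obtain ⟨i, hi, hia⟩ := h
    simpa only [if_pos hia] using Finset.single_le_sum hterm hi
  · exact Finset.sum_nonneg hterm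

end UnionBound

section GeneralizedBooleanAlgebra

variable {α : Type*} [GeneralizedBooleanAlgebra α]

theorem sdiff_left_injOn_Ici (a : α) : Set.InjOn (· \ a) (Set.Ici a) := fun b hb c hc h ↦ by
  rw [← sdiff_sup_cancel hb, ← sdiff_sup_cancel hc]
  exact congrArg (· ⊔ a) h

theorem sum_sdiff_filter_le_le_sum [DecidableLE α] {M : Type*} [AddCommMonoid M]
    [PartialOrder M] [IsOrderedAddMonoid M] {Z : Finset α} {a : α} (hZ : ∀ b ∈ Z, a ≤ b → b \ a ∈ Z)
    {w : α → M} (hw : ∀ b ∈ Z, 0 ≤ w b) :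
    ∑ b ∈ Z with a ≤ b, w (b \ a) ≤ ∑ b ∈ Z, w b := by
  classical
  have hinj : Set.InjOn (· \ a) (Z.filter (a ≤ ·) : Set α) :=
    (sdiff_left_injOn_Ici a).mono fun b hb ↦ (Finset.mem_filter.1 hb).2
  have himage : (Z.filter (a ≤ ·)).image (· \ a) ⊆ Z :=
    Finset.image_subset_iff.2 fun b hb ↦ (Finset.mem_filter.1 hb).elim (hZ b)
  rw [← Finset.sum_image (f := w) hinj]
  exact Finset.sum_le_sum_of_subset_of_nonneg himage fun b hb _ ↦ hw b hb

variable {R : Type*} [Semiring R] [PartialOrder R] [IsOrderedRing R]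

theorem sum_filter_exists_le_le_sum_mul_sum {L Z : Finset α}
    [DecidablePred fun b ↦ ∃ a ∈ L, a ≤ b] (hZ : ∀ a ∈ L, ∀ b ∈ Z, a ≤ b → b \ a ∈ Z)
    {w : α → R} (hw₀ : ∀ a, 0 ≤ w a) (hw : ∀ a b, a ≤ b → w b ≤ w a * w (b \ a)) :
    ∑ b ∈ Z with ∃ a ∈ L, a ≤ b, w b ≤ (∑ a ∈ L, w a) * ∑ b ∈ Z, w b := by
  classical
  calc ∑ b ∈ Z with ∃ a ∈ L, a ≤ b, w b
      ≤ ∑ a ∈ L, ∑ b ∈ Z with a ≤ b, w b :=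
        sum_filter_exists_le_sum_sum_filter L Z (· ≤ ·) fun b _ ↦ hw₀ b
    _ ≤ ∑ a ∈ L, ∑ b ∈ Z with a ≤ b, w a * w (b \ a) :=
        Finset.sum_le_sum fun a _ ↦ Finset.sum_le_sum fun b hb ↦
          hw a b (Finset.mem_filter.1 hb).2
    _ = ∑ a ∈ L, w a * ∑ b ∈ Z with a ≤ b, w (b \ a) := by simp only [Finset.mul_sum]
    _ ≤ ∑ a ∈ L, w a * ∑ b ∈ Z, w b :=
        Finset.sum_le_sum fun a ha ↦ mul_le_mul_of_nonneg_left
          (sum_sdiff_filter_le_le_sum (hZ a ha) fun b _ ↦ hw₀ b) (hw₀ a)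
    _ = (∑ a ∈ L, w a) * ∑ b ∈ Z, w b := (Finset.sum_mul ..).symm

end GeneralizedBooleanAlgebra

theorem sum_exp_exists_subset_le_general {E : Type*} [DecidableEq E] {L Z : Finset (Finset E)}
    (hZ : ∀ l ∈ L, ∀ c ∈ Z, l ⊆ c → c \ l ∈ Z) (J : E → ℝ) :
    ∑ c ∈ Z with ∃ l ∈ L, l ⊆ c, Real.exp (-2 * ∑ e ∈ c, J e) ≤
      (∑ l ∈ L, Real.exp (-2 * ∑ e ∈ l, J e)) * ∑ c ∈ Z, Real.exp (-2 * ∑ e ∈ c, J e) := by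
  refine sum_filter_exists_le_le_sum_mul_sum hZ (fun _ ↦ Real.exp_nonneg _) fun l c hlc ↦ ?_
  rw [← Real.exp_add, ← mul_add, add_comm, Finset.sum_sdiff hlc]

/-- Union bound version: the weight of cycles containing some loop from a subfamily `L`
is bounded by the weight of `L` times the total weight. -/
theorem sum_exp_exists_subset_le {E : Type*} [Fintype E] [DecidableEq E]
    (Z : Finset (Finset E))
    (hZ : ∀ a ∈ Z, ∀ b ∈ Z, a ∆ b ∈ Z)
    (β : ℝ) (hβ : 0 ≤ β) (L : Finset (Finset E)) (hL : L ⊆ Z) :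
    ∑ c ∈ Z.filter (fun c => ∃ l ∈ L, l ⊆ c), Real.exp (-2 * β * c.card) ≤
      (∑ l ∈ L, Real.exp (-2 * β * l.card)) *
        ∑ c ∈ Z, Real.exp (-2 * β * c.card) := by
  simpa only [Finset.sum_const, nsmul_eq_mul, mul_comm _ β, ← mul_assoc] using
    sum_exp_exists_subset_le_general
      (fun l hl c hc hlc ↦ symmDiff_of_ge (α := Finset E) hlc ▸ hZ c hc l (hL hl)) (fun _ ↦ β)
end
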